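/- Let H = ℓ²(ℤ), let U be a unitary operator on H, and let W_1 and W_2 be the weighted bilateral shifts given by W_1 e_j = 2 e_{j+1} for j<0, W_1 e_j = (1/2) e_{j+1} for j≥0, W_2 e_j = 3 e_{j+1} for j<0, W_2 e_j = (1/3) e_{j+1} for j≥0. Let r_1∈ℕ with r_1 ≥ 1 and r_2 = 2r_1, and let T_1 = T_{U,W_1^*} and T_2 = T_{U,W_2^*} act on B(H) (where W_1^*, W_2^* are the Hilbert-space adjoints). Then (T_1^*)^{r_1} and (T_2^*)^{r_2} are d-topologically transitive on B(H)^*, the continuous dual of B(H) with the strong operator topology, endowed with the weak-* topology. -/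

import Mathlib

open scoped Topology
open Filter

noncomputable section

variable {H : Type*} [NormedAddCommGroup H] [InnerProductSpace ℂ H] [CompleteSpace H]

/-- The strong operator topology on `B(H)`: the topology induced by the inclusion of
`B(H)` into `H → H` with the topology of pointwise convergence. -/
def sot (H : Type*) [NormedAddCommGroup H] [InnerProductSpace ℂ H] :
    TopologicalSpace (H →L[ℂ] H) :=
  TopologicalSpace.induced (fun T : H →L[ℂ] H => (T : H → H)) Pi.topologicalSpace

/-- `B(H)^*`: the space of linear functionals on `B(H)` that are continuous for the strong
operator topology. -/
def SOTDual (H : Type*) [NormedAddCommGroup H] [InnerProductSpace ℂ H] : Type _ :=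
  {φ : (H →L[ℂ] H) →ₗ[ℂ] ℂ // Continuous[sot H, inferInstance] φ}

/-- The weak-* topology on `B(H)^*`: the topology of pointwise convergence on `B(H)`. -/
instance (H : Type*) [NormedAddCommGroup H] [InnerProductSpace ℂ H] :
    TopologicalSpace (SOTDual H) :=
  TopologicalSpace.induced (fun φ : SOTDual H => (φ.1 : (H →L[ℂ] H) → ℂ))
    Pi.topologicalSpace

/-- The elementary operator `T_{U,W} : F ↦ W F U` as a bounded operator on `B(H)`. -/
def elem (U W : H →L[ℂ] H) : (H →L[ℂ] H) →L[ℂ] (H →L[ℂ] H) :=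
  ((ContinuousLinearMap.compL ℂ H H H) W).comp
    (((ContinuousLinearMap.compL ℂ H H H)).flip U)

/-- The elementary operator `T_{U,W}` is continuous on `B(H)` for the strong operator
topology. -/
theorem elem_sotContinuous (U W : H →L[ℂ] H) :
    Continuous[sot H, sot H] (elem U W) := by
  letI : TopologicalSpace (H →L[ℂ] H) := sot H
  show Continuous (elem U W)
  refine continuous_induced_rng.2 (continuous_pi fun x => ?_)
  have h1 : Continuous fun F : H →L[ℂ] H => F (U x) :=
    (continuous_apply (U x)).comp continuous_induced_dom
  exact W.continuous.comp h1

/-- The dual `T^*` of the elementary operator `T = T_{U,W}`, acting on `B(H)^*` by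
`(T^* φ)(F) = φ(T F) = φ(W F U)`. -/
def dualElem (U W : H →L[ℂ] H) : SOTDual H → SOTDual H := fun φ =>
  ⟨φ.1.comp (elem U W).toLinearMap, by
    letI : TopologicalSpace (H →L[ℂ] H) := sot H
    exact φ.2.comp (elem_sotContinuous U W)⟩

/-- `IsW e c W` says that `W` is the weighted bilateral shift `e j ↦ c e (j+1)` for `j < 0`
and `e j ↦ c⁻¹ e (j+1)` for `j ≥ 0`, as an invertible bounded operator. -/
def IsW (e : HilbertBasis ℤ ℂ H) (c : ℂ) (W : (H →L[ℂ] H)ˣ) : Prop :=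
  (∀ j : ℤ, j < 0 → (W : H →L[ℂ] H) (e j) = c • e (j + 1)) ∧
  (∀ j : ℤ, 0 ≤ j → (W : H →L[ℂ] H) (e j) = c⁻¹ • e (j + 1))

theorem sotDual_cont (φ : SOTDual H) : Continuous (fun F : H →L[ℂ] H => φ.1 F) := by
  have h : Continuous[inferInstance, sot H] (fun F : H →L[ℂ] H => F) := by
    refine continuous_induced_rng.2 (continuous_pi fun x => ?_)
    exact (ContinuousLinearMap.apply ℂ H x).continuous
  exact @Continuous.comp _ _ _ _ (sot H) _ _ _ φ.2 h

theorem tendsto_sotDual {ι : Type*} {l : Filter ι} {f : ι → SOTDual H} {φ : SOTDual H}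
    (h : ∀ F, Tendsto (fun i => (f i).1 F) l (𝓝 (φ.1 F))) : Tendsto f l (𝓝 φ) := by
  rw [nhds_induced, tendsto_comap_iff, tendsto_pi_nhds]
  exact h

def add3 (a b c : SOTDual H) : SOTDual H :=
  ⟨a.1 + b.1 + c.1, by
    letI : TopologicalSpace (H →L[ℂ] H) := sot H
    exact (a.2.add b.2).add c.2⟩

theorem mul_ap (A B : H →L[ℂ] H) (x : H) : (A * B) x = A (B x) := rfl

theorem dualElem_apply (U W : H →L[ℂ] H) (φ : SOTDual H) (F : H →L[ℂ] H) :
    (dualElem U W φ).1 F = φ.1 (W * F * U) := rfl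

theorem add3_apply (a b c : SOTDual H) (F : H →L[ℂ] H) :
    (add3 a b c).1 F = a.1 F + b.1 F + c.1 F := rfl

theorem dualElem_iter (U W : H →L[ℂ] H) (n : ℕ) (φ : SOTDual H) (F : H →L[ℂ] H) :
    ((dualElem U W)^[n] φ).1 F = φ.1 (W ^ n * F * U ^ n) := by
  induction n generalizing φ with
  | zero => simp
  | succ n ih =>
    rw [Function.iterate_succ_apply, ih, dualElem_apply]
    congr 1
    rw [pow_succ' W, pow_succ U]
    simp only [mul_assoc]

theorem alg1 {M : Type*} [Monoid M] (a b c d : M) : a * (b * c * d) * 1 = a * b * c * d := by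
  simp only [mul_assoc, mul_one]

theorem alg2 {M : Type*} [Monoid M] (p y x f u v : M) (h : y * x = 1) (h' : u * v = 1) :
    p * y * (x * f * u) * v = p * f * 1 := by
  calc p * y * (x * f * u) * v = p * (y * x) * f * (u * v) := by simp only [mul_assoc]
    _ = _ := by rw [h, h', mul_one, mul_one, mul_one]

theorem alg3 {M : Type*} [Monoid M] (p y x f u v : M) :
    p * y * (x * f * u) * v = p * (y * x) * f * (u * v) := by
  simp only [mul_assoc]

/-- The coordinate projection onto the span of `e j`, `j ∈ s`. -/
def proj (e : HilbertBasis ℤ ℂ H) (s : Finset ℤ) : H →L[ℂ] H :=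
  ∑ j ∈ s, (innerSL ℂ (e j)).smulRight (e j)

theorem proj_apply (e : HilbertBasis ℤ ℂ H) (s : Finset ℤ) (x : H) :
    proj e s x = ∑ j ∈ s, (inner ℂ (e j) x) • e j := by
  simp [proj]

theorem proj_tendsto (e : HilbertBasis ℤ ℂ H) (φ : SOTDual H) :
    Tendsto (fun s => dualElem 1 (proj e s) φ) atTop (𝓝 φ) := by
  refine tendsto_sotDual fun F => ?_
  have h : Tendsto (fun s => proj e s * F) atTop (@nhds _ (sot H) F) := by
    rw [sot, nhds_induced, tendsto_comap_iff, tendsto_pi_nhds]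
    intro x
    have := e.hasSum_repr (F x)
    simp only [HilbertBasis.repr_apply_apply] at this
    refine Tendsto.congr (fun s => ?_) this
    simp [proj_apply]
  have h2 := (@Continuous.tendsto _ _ (sot H) _ _ φ.2 F).comp h
  refine h2.congr fun s => ?_
  simp [dualElem_apply]

theorem proj_star_norm (e : HilbertBasis ℤ ℂ H) (s : Finset ℤ) (A : H →L[ℂ] H) :
    ‖proj e s * star A‖ ≤ ∑ j ∈ s, ‖A (e j)‖ := by
  refine ContinuousLinearMap.opNorm_le_bound _ (Finset.sum_nonneg fun _ _ => norm_nonneg _) ?_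
  intro x
  rw [mul_ap, proj_apply, Finset.sum_mul]
  refine (norm_sum_le _ _).trans (Finset.sum_le_sum fun j _ => ?_)
  rw [norm_smul, e.orthonormal.1 j, mul_one, ContinuousLinearMap.star_eq_adjoint,
    ContinuousLinearMap.adjoint_inner_right]
  exact norm_inner_le_norm _ _

theorem key (e : HilbertBasis ℤ ℂ H) (s : Finset ℤ) (A V : ℕ → H →L[ℂ] H)
    (hA : ∀ j, Tendsto (fun m => ‖A m (e j)‖) atTop (𝓝 0))
    (hV : ∀ m, V m ∈ unitary (H →L[ℂ] H)) (φ : SOTDual H) (F : H →L[ℂ] H) :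
    Tendsto (fun m => φ.1 (proj e s * star (A m) * F * V m)) atTop (𝓝 0) := by
  have h0 : Tendsto (fun m => proj e s * star (A m) * F * V m) atTop (𝓝 0) := by
    have h1 : Tendsto (fun m => (∑ j ∈ s, ‖A m (e j)‖) * ‖F‖) atTop (𝓝 0) := by
      have := (tendsto_finsetSum s fun j _ => hA j).mul_const ‖F‖
      simpa using this
    refine squeeze_zero_norm (fun m => ?_) h1
    rw [CStarRing.norm_mul_mem_unitary _ (hV m)]
    exact (norm_mul_le _ _).trans
      (mul_le_mul_of_nonneg_right (proj_star_norm e s _) (norm_nonneg _))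
  have := ((sotDual_cont φ).tendsto 0).comp h0
  simpa [Function.comp_def] using this

theorem isW_apply {e : HilbertBasis ℤ ℂ H} {c : ℂ} {W : (H →L[ℂ] H)ˣ} (hc : c ≠ 0)
    (h : IsW e c W) (j : ℤ) :
    (W : H →L[ℂ] H) (e j) = (c ^ (|j| - |j + 1|)) • e (j + 1) := by
  rcases lt_or_ge j 0 with hj | hj
  · rw [h.1 j hj, abs_of_neg hj, abs_of_nonpos (by omega),
      show -j - -(j + 1) = 1 by ring, zpow_one]
  · rw [h.2 j hj, abs_of_nonneg hj, abs_of_nonneg (by omega),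
      show j - (j + 1) = -1 by ring, zpow_neg_one]

theorem isW_pow {e : HilbertBasis ℤ ℂ H} {c : ℂ} {W : (H →L[ℂ] H)ˣ} (hc : c ≠ 0)
    (h : IsW e c W) (m : ℕ) (j : ℤ) :
    ((W : H →L[ℂ] H) ^ m) (e j) = (c ^ (|j| - |j + m|)) • e (j + m) := by
  induction m with
  | zero => simp
  | succ m ih =>
    rw [pow_succ', mul_ap, ih, map_smul, isW_apply hc h, smul_smul,
      ← zpow_add₀ hc]
    push_cast
    rw [← add_assoc]
    congr 2
    ring

theorem isW_inv_apply {e : HilbertBasis ℤ ℂ H} {c : ℂ} {W : (H →L[ℂ] H)ˣ} (hc : c ≠ 0)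
    (h : IsW e c W) (j : ℤ) :
    ((W⁻¹ : (H →L[ℂ] H)ˣ) : H →L[ℂ] H) (e j) = (c ^ (|j| - |j - 1|)) • e (j - 1) := by
  have h1 := isW_apply hc h (j - 1)
  rw [sub_add_cancel] at h1
  have h2 : ((W⁻¹ : (H →L[ℂ] H)ˣ) : H →L[ℂ] H) ((W : H →L[ℂ] H) (e (j - 1))) = e (j - 1) := by
    rw [← mul_ap, Units.inv_mul]; rfl
  rw [h1, map_smul] at h2
  rw [← h2, smul_smul, ← zpow_add₀ hc]
  simp

theorem isW_inv_pow {e : HilbertBasis ℤ ℂ H} {c : ℂ} {W : (H →L[ℂ] H)ˣ} (hc : c ≠ 0)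
    (h : IsW e c W) (m : ℕ) (j : ℤ) :
    (((W⁻¹ : (H →L[ℂ] H)ˣ) : H →L[ℂ] H) ^ m) (e j) = (c ^ (|j| - |j - m|)) • e (j - m) := by
  induction m with
  | zero => simp
  | succ m ih =>
    rw [pow_succ', mul_ap, ih, map_smul, isW_inv_apply hc h, smul_smul,
      ← zpow_add₀ hc]
    push_cast
    rw [← sub_sub]
    congr 2
    ring

theorem tendsto_of_bd (f : ℕ → ℝ) (C : ℝ) (h0 : ∀ m, 0 ≤ f m) (N : ℤ)
    (h : ∀ m : ℕ, f m ≤ C * 2 ^ (N - m : ℤ)) : Tendsto f atTop (𝓝 0) := by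
  have h1 : Tendsto (fun m : ℕ => C * 2 ^ N * ((1 / 2 : ℝ)) ^ m) atTop (𝓝 0) := by
    have := (tendsto_pow_atTop_nhds_zero_of_lt_one (r := (1 / 2 : ℝ)) (by norm_num)
      (by norm_num)).const_mul (C * 2 ^ N)
    simpa using this
  refine squeeze_zero h0 (fun m => (h m).trans (le_of_eq ?_)) h1
  rw [zpow_sub₀ (by norm_num)]
  simp
  ring

theorem zpow_two_three (k : ℤ) (hk : k ≤ 0) : (3 : ℝ) ^ k ≤ 2 ^ k := by
  obtain ⟨n, rfl⟩ : ∃ n : ℕ, k = -n := ⟨k.natAbs, by omega⟩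
  rw [zpow_neg, zpow_neg, zpow_natCast, zpow_natCast]
  gcongr
  norm_num

/-- With `H = ℓ²(ℤ)` (a Hilbert space with orthonormal basis `{e j}_{j ∈ ℤ}`), `U` a unitary
operator on `H`, `W₁, W₂` the weighted bilateral shifts above, `r₂ = 2r₁`, and
`T₁ = T_{U,W₁^*}`, `T₂ = T_{U,W₂^*}` acting on `B(H)`, the dual operators `(T₁^*)^{r₁}` and
`(T₂^*)^{r₂}` are d-topologically transitive on `B(H)^*`. -/
theorem stmt17 (e : HilbertBasis ℤ ℂ H) (U : H →L[ℂ] H) (hU : U ∈ unitary (H →L[ℂ] H))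
    (W₁ W₂ : (H →L[ℂ] H)ˣ) (hW₁ : IsW e (2 : ℂ) W₁) (hW₂ : IsW e (3 : ℂ) W₂)
    (r₁ r₂ : ℕ) (hr₁ : 1 ≤ r₁) (hr₂ : r₂ = 2 * r₁) :
    ∀ O V₁ V₂ : Set (SOTDual H),
      IsOpen O → IsOpen V₁ → IsOpen V₂ → O.Nonempty → V₁.Nonempty → V₂.Nonempty →
      ∃ n : ℕ, ∃ φ ∈ O,
        ((dualElem U (ContinuousLinearMap.adjoint (W₁ : H →L[ℂ] H)))^[r₁])^[n] φ ∈ V₁ ∧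
        ((dualElem U (ContinuousLinearMap.adjoint (W₂ : H →L[ℂ] H)))^[r₂])^[n] φ ∈ V₂ := by
  intro O V₁ V₂ hO hV₁ hV₂ ⟨φ, hφ⟩ ⟨ψ₁, hψ₁⟩ ⟨ψ₂, hψ₂⟩
  have c2 : (2 : ℂ) ≠ 0 := by norm_num
  have c3 : (3 : ℂ) ≠ 0 := by norm_num
  obtain ⟨s, ⟨hs0, hs1⟩, hs2⟩ := (((proj_tendsto e φ).eventually (hO.mem_nhds hφ)).and
    ((proj_tendsto e ψ₁).eventually (hV₁.mem_nhds hψ₁))).and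
    ((proj_tendsto e ψ₂).eventually (hV₂.mem_nhds hψ₂)) |>.exists
  have hUs : star U ∈ unitary (H →L[ℂ] H) := Unitary.star_mem hU
  have hUp : ∀ m, U ^ m ∈ unitary (H →L[ℂ] H) := fun m => pow_mem hU m
  have hUsp : ∀ m, star U ^ m ∈ unitary (H →L[ℂ] H) := fun m => pow_mem hUs m
  set X₁ : H →L[ℂ] H := (W₁ : H →L[ℂ] H) with hX₁
  set X₂ : H →L[ℂ] H := (W₂ : H →L[ℂ] H) with hX₂
  set Y₁ : H →L[ℂ] H := ((W₁⁻¹ : (H →L[ℂ] H)ˣ) : H →L[ℂ] H) with hY₁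
  set Y₂ : H →L[ℂ] H := ((W₂⁻¹ : (H →L[ℂ] H)ˣ) : H →L[ℂ] H) with hY₂
  have pX₁ : ∀ (m : ℕ) j, (X₁ ^ m) (e j) = _ := isW_pow c2 hW₁
  have pX₂ : ∀ (m : ℕ) j, (X₂ ^ m) (e j) = _ := isW_pow c3 hW₂
  have pY₁ : ∀ (m : ℕ) j, (Y₁ ^ m) (e j) = _ := isW_inv_pow c2 hW₁
  have pY₂ : ∀ (m : ℕ) j, (Y₂ ^ m) (e j) = _ := isW_inv_pow c3 hW₂
  have ne : ∀ j, ‖e j‖ = 1 := e.orthonormal.1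
  have b1 : ∀ j, Tendsto (fun m => ‖(X₁ ^ m) (e j)‖) atTop (𝓝 0) := by
    intro j
    refine tendsto_of_bd _ 1 (fun _ => norm_nonneg _) (2 * |j|) fun m => ?_
    rw [pX₁, norm_smul, ne, norm_zpow, RCLike.norm_ofNat, one_mul, mul_one]
    exact zpow_le_zpow_right₀ (by norm_num) (by simp only [Int.abs_eq_natAbs]; omega)
  have b2 : ∀ j, Tendsto (fun m => ‖(Y₁ ^ m) (e j)‖) atTop (𝓝 0) := by
    intro j
    refine tendsto_of_bd _ 1 (fun _ => norm_nonneg _) (2 * |j|) fun m => ?_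
    rw [pY₁, norm_smul, ne, norm_zpow, RCLike.norm_ofNat, one_mul, mul_one]
    exact zpow_le_zpow_right₀ (by norm_num) (by simp only [Int.abs_eq_natAbs]; omega)
  have a3 : ∀ (k N : ℤ) (m : ℕ), 0 ≤ N → k ≤ N - m → (3 : ℝ) ^ k ≤ 3 ^ N * 2 ^ (0 - m : ℤ) := by
    intro k N m hN hk
    calc (3 : ℝ) ^ k ≤ 3 ^ (N + (0 - m : ℤ)) := zpow_le_zpow_right₀ (by norm_num) (by omega)
      _ = 3 ^ N * 3 ^ (0 - m : ℤ) := zpow_add₀ (by norm_num) _ _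
      _ ≤ _ := by
        gcongr
        exact zpow_two_three _ (by omega)
  have b3 : ∀ j, Tendsto (fun m => ‖(X₂ ^ (2 * m)) (e j)‖) atTop (𝓝 0) := by
    intro j
    refine tendsto_of_bd _ (3 ^ (2 * |j|)) (fun _ => norm_nonneg _) 0 fun m => ?_
    rw [pX₂, norm_smul, ne, norm_zpow, RCLike.norm_ofNat, mul_one]
    exact a3 _ _ _ (by positivity) (by push_cast; simp only [Int.abs_eq_natAbs]; omega)
  have b4 : ∀ j, Tendsto (fun m => ‖(Y₂ ^ (2 * m)) (e j)‖) atTop (𝓝 0) := by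
    intro j
    refine tendsto_of_bd _ (3 ^ (2 * |j|)) (fun _ => norm_nonneg _) 0 fun m => ?_
    rw [pY₂, norm_smul, ne, norm_zpow, RCLike.norm_ofNat, mul_one]
    exact a3 _ _ _ (by positivity) (by push_cast; simp only [Int.abs_eq_natAbs]; omega)
  have b5 : ∀ j, Tendsto (fun m => ‖(X₁ ^ m * Y₂ ^ (2 * m)) (e j)‖) atTop (𝓝 0) := by
    intro j
    refine tendsto_of_bd _ (3 ^ (2 * |j|)) (fun _ => norm_nonneg _) 0 fun m => ?_
    rw [mul_ap, pY₂, map_smul, pX₁, norm_smul, norm_smul, ne, norm_zpow,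
      norm_zpow, RCLike.norm_ofNat, RCLike.norm_ofNat, mul_one]
    calc (3 : ℝ) ^ (|j| - |j - ((2 * m : ℕ) : ℤ)|)
          * 2 ^ (|j - ((2 * m : ℕ) : ℤ)| - |j - ((2 * m : ℕ) : ℤ) + m|)
        ≤ 3 ^ (2 * |j| + (0 - 2 * m : ℤ)) * 2 ^ (m : ℤ) := by
          gcongr
          · norm_num
          · push_cast; simp only [Int.abs_eq_natAbs]; omega
          · norm_num
          · push_cast; simp only [Int.abs_eq_natAbs]; omega
      _ = 3 ^ (2 * |j|) * 3 ^ (0 - 2 * m : ℤ) * 2 ^ (m : ℤ) := by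
          rw [zpow_add₀ (by norm_num)]
      _ ≤ 3 ^ (2 * |j|) * 2 ^ (0 - 2 * m : ℤ) * 2 ^ (m : ℤ) := by
          gcongr
          exact zpow_two_three _ (by omega)
      _ = 3 ^ (2 * |j|) * 2 ^ (0 - m : ℤ) := by
          rw [mul_assoc, ← zpow_add₀ (by norm_num)]
          congr 2
          ring
  have b6 : ∀ j, Tendsto (fun m => ‖(X₂ ^ (2 * m) * Y₁ ^ m) (e j)‖) atTop (𝓝 0) := by
    intro j
    refine tendsto_of_bd _ (3 ^ (2 * |j|)) (fun _ => norm_nonneg _) (2 * |j|) fun m => ?_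
    rw [mul_ap, pY₁, map_smul, pX₂, norm_smul, norm_smul, ne, norm_zpow,
      norm_zpow, RCLike.norm_ofNat, RCLike.norm_ofNat, mul_one, mul_comm]
    refine mul_le_mul (zpow_le_zpow_right₀ (by norm_num) ?_)
      (zpow_le_zpow_right₀ (by norm_num) ?_) (by positivity) (by positivity)
    · push_cast; simp only [Int.abs_eq_natAbs]; omega
    · simp only [Int.abs_eq_natAbs]; omega
  set P := proj e s with hP
  let Φ : ℕ → SOTDual H := fun m => add3 (dualElem 1 P φ)
    (dualElem (star U ^ m) (P * star (Y₁ ^ m)) ψ₁)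
    (dualElem (star U ^ (2 * m)) (P * star (Y₂ ^ (2 * m))) ψ₂)
  have hΦ : ∀ m F, (Φ m).1 F = φ.1 (P * F * 1) + ψ₁.1 (P * star (Y₁ ^ m) * F * star U ^ m)
      + ψ₂.1 (P * star (Y₂ ^ (2 * m)) * F * star U ^ (2 * m)) := fun m F => by
    rw [add3_apply, dualElem_apply, dualElem_apply, dualElem_apply]
  clear_value Φ
  have hUU : ∀ m, U ^ m * star U ^ m = 1 := fun m => by
    rw [← star_pow]; exact Unitary.mul_star_self_of_mem (hUp m)
  have hXY₁ : ∀ m, star (Y₁ ^ m) * star X₁ ^ m = 1 := fun m => by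
    rw [← star_pow, ← star_mul, hX₁, hY₁, ← Units.val_pow_eq_pow_val, ← Units.val_pow_eq_pow_val,
      ← Units.val_mul, inv_pow, mul_inv_cancel, Units.val_one, star_one]
  have hXY₂ : ∀ m, star (Y₂ ^ m) * star X₂ ^ m = 1 := fun m => by
    rw [← star_pow, ← star_mul, hX₂, hY₂, ← Units.val_pow_eq_pow_val, ← Units.val_pow_eq_pow_val,
      ← Units.val_mul, inv_pow, mul_inv_cancel, Units.val_one, star_one]
  have t0 : Tendsto Φ atTop (𝓝 (dualElem 1 P φ)) := by
    refine tendsto_sotDual fun F => ?_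
    have k1 := key e s (fun m => Y₁ ^ m) (fun m => star U ^ m) b2 (fun m => hUsp _) ψ₁ F
    have k2 := key e s (fun m => Y₂ ^ (2 * m)) (fun m => star U ^ (2 * m)) b4
      (fun m => hUsp _) ψ₂ F
    have := (tendsto_const_nhds (x := (dualElem 1 P φ).1 F)).add k1 |>.add k2
    rw [add_zero, add_zero] at this
    refine this.congr fun m => ?_
    rw [hΦ, dualElem_apply]
  have t1 : Tendsto (fun m => (dualElem U (star X₁))^[m] (Φ m)) atTop
      (𝓝 (dualElem 1 P ψ₁)) := by
    refine tendsto_sotDual fun F => ?_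
    have k1 := key e s (fun m => X₁ ^ m) (fun m => U ^ m) b1 (fun m => hUp _) φ F
    have k2 := key e s (fun m => X₁ ^ m * Y₂ ^ (2 * m)) (fun m => U ^ m * star U ^ (2 * m)) b5
      (fun m => mul_mem (hUp _) (hUsp _)) ψ₂ F
    have := (k1.add (tendsto_const_nhds (x := (dualElem 1 P ψ₁).1 F))).add k2
    rw [zero_add, add_zero] at this
    refine this.congr fun m => ?_
    rw [dualElem_iter, hΦ, dualElem_apply]
    rw [star_mul, star_pow X₁, alg1, alg2 _ _ _ _ _ _ (hXY₁ m) (hUU m), alg3]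
  have t2 : Tendsto (fun m => (dualElem U (star X₂))^[2 * m] (Φ m)) atTop
      (𝓝 (dualElem 1 P ψ₂)) := by
    refine tendsto_sotDual fun F => ?_
    have k1 := key e s (fun m => X₂ ^ (2 * m)) (fun m => U ^ (2 * m)) b3 (fun m => hUp _) φ F
    have k2 := key e s (fun m => X₂ ^ (2 * m) * Y₁ ^ m) (fun m => U ^ (2 * m) * star U ^ m) b6
      (fun m => mul_mem (hUp _) (hUsp _)) ψ₁ F
    have := (k1.add k2).add (tendsto_const_nhds (x := (dualElem 1 P ψ₂).1 F))
    rw [zero_add, zero_add] at this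
    refine this.congr fun m => ?_
    rw [dualElem_iter, hΦ, dualElem_apply]
    rw [star_mul, star_pow X₂, alg1, alg2 _ _ _ _ _ _ (hXY₂ (2 * m)) (hUU (2 * m)), alg3]
  obtain ⟨M, hM⟩ := eventually_atTop.1 (((t0.eventually (hO.mem_nhds hs0)).and
    (t1.eventually (hV₁.mem_nhds hs1))).and (t2.eventually (hV₂.mem_nhds hs2)))
  obtain ⟨⟨h0, h1⟩, h2⟩ := hM (r₁ * M) (Nat.le_mul_of_pos_left M hr₁)
  refine ⟨M, Φ (r₁ * M), h0, ?_, ?_⟩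
  · rw [← Function.iterate_mul, ← ContinuousLinearMap.star_eq_adjoint]
    exact h1
  · rw [← Function.iterate_mul, ← ContinuousLinearMap.star_eq_adjoint, hr₂, mul_assoc]
    exact h2

end
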